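/- arXiv:1509.05246 — 2 statements merged into one kernel-verified Lean document; each statement's English description precedes it below -/
import Mathlib

section
/- Let (X,T) be a topological dynamical system given by a continuous ℤ^d-action on a compact metric space. If (X,T) is mean equicontinuous, then it is uniformly mean equicontinuous: for every ε > 0 there exists δ > 0 such that whenever d(x,y) ≤ δ, the upper density of {i ∈ ℤ^d : d(T^i x, T^i y) > ε} is less than ε. -/
open MeasureTheory Filter Finset Metric
open scoped Classical

noncomputable section

/-- The box `{0,…,n−1}^d` inside `ℤ^d`. -/
def Fbox (d n : ℕ) : Finset (Fin d → ℤ) :=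
  Fintype.piFinset fun _ => Finset.Icc (0 : ℤ) ((n : ℤ) - 1)

/-- Upper density of a subset of `ℤ^d` along the boxes `F_n`. -/
def upperDensity (d : ℕ) (S : Set (Fin d → ℤ)) : ℝ :=
  Filter.limsup
    (fun n : ℕ => (((Fbox d n).filter (fun j => j ∈ S)).card : ℝ) / ((Fbox d n).card : ℝ))
    Filter.atTop

/-- Lower density of a subset of `ℤ^d` along the boxes `F_n`. -/
def lowerDensity (d : ℕ) (S : Set (Fin d → ℤ)) : ℝ :=
  Filter.liminf
    (fun n : ℕ => (((Fbox d n).filter (fun j => j ∈ S)).card : ℝ) / ((Fbox d n).card : ℝ))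
    Filter.atTop

variable {X : Type*}

/-- The Besicovitch pseudometric `d_b(x,y) = limsup_n (1/|F_n|) Σ_{j∈F_n} d(T^j x, T^j y)`. -/
def dB {d : ℕ} [PseudoMetricSpace X] (T : (Fin d → ℤ) → X → X) (x y : X) : ℝ :=
  Filter.limsup (fun n : ℕ =>
    (∑ j ∈ Fbox d n, dist (T j x) (T j y)) / ((Fbox d n).card : ℝ)) Filter.atTop

/-- a mean equicontinuous TDS is uniformly mean equicontinuous. -/
theorem stmt8 {d : ℕ}
    [MetricSpace X] [CompactSpace X]
    (T : (Fin d → ℤ) → X → X)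
    (hTc : ∀ j, Continuous (T j))
    (hTadd : ∀ i j, T (i + j) = T i ∘ T j)
    (hme : ∀ x : X, ∀ ε : ℝ, 0 < ε → ∃ δ : ℝ, 0 < δ ∧
      ∀ y : X, dist x y ≤ δ → dB T x y < ε) :
    ∀ ε : ℝ, 0 < ε → ∃ δ : ℝ, 0 < δ ∧
      ∀ x y : X, dist x y ≤ δ →
        upperDensity d {i : Fin d → ℤ | ε < dist (T i x) (T i y)} < ε := by
  intro ε hε
  have key : ∀ x y : X, ∀ c : ℝ, dB T x y < c → ∀ᶠ n : ℕ in atTop,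
      (∑ j ∈ Fbox d n, dist (T j x) (T j y)) / ((Fbox d n).card : ℝ) < c := by
    intro x y c h
    refine eventually_lt_of_limsup_lt h ?_
    refine isBoundedUnder_of ⟨Metric.diam (Set.univ : Set X), fun n => ?_⟩
    refine div_le_of_le_mul₀ (by positivity) Metric.diam_nonneg ?_
    have := Finset.sum_le_card_nsmul (Fbox d n) (fun j => dist (T j x) (T j y))
      (Metric.diam (Set.univ : Set X)) (fun j _ =>
        Metric.dist_le_diam_of_mem isCompact_univ.isBounded (Set.mem_univ _) (Set.mem_univ _))
    rw [nsmul_eq_mul] at this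
    linarith [mul_comm ((Fbox d n).card : ℝ) (Metric.diam (Set.univ : Set X))]
  choose δ hδ0 hδ using fun x => hme x (ε ^ 2 / 4) (by positivity)
  obtain ⟨r, hr, hcov⟩ := lebesgue_number_lemma_of_metric (s := (Set.univ : Set X))
    (c := fun z => Metric.ball z (δ z)) isCompact_univ (fun z => Metric.isOpen_ball)
    (fun x _ => Set.mem_iUnion.2 ⟨x, Metric.mem_ball_self (hδ0 x)⟩)
  refine ⟨r / 2, by positivity, fun x y hxy => ?_⟩
  obtain ⟨z, hz⟩ := hcov x (Set.mem_univ x)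
  have hx : x ∈ Metric.ball z (δ z) := hz (Metric.mem_ball_self hr)
  have hy : y ∈ Metric.ball z (δ z) := hz (by rw [Metric.mem_ball, dist_comm]; linarith)
  rw [Metric.mem_ball'] at hx hy
  have h1 := key z x _ (hδ z x hx.le)
  have h2 := key z y _ (hδ z y hy.le)
  refine lt_of_le_of_lt (b := ε / 2) ?_ (by linarith)
  refine limsup_le_of_le (IsBoundedUnder.isCoboundedUnder_le
    (isBoundedUnder_of ⟨0, fun n => by positivity⟩)) ?_
  filter_upwards [h1, h2] with n h1 h2
  have hc : (((Fbox d n).filter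
      (fun j => j ∈ {i : Fin d → ℤ | ε < dist (T i x) (T i y)})).card : ℝ) * ε ≤
      ∑ j ∈ Fbox d n, dist (T j z) (T j x) + ∑ j ∈ Fbox d n, dist (T j z) (T j y) := by
    rw [← Finset.sum_add_distrib, ← nsmul_eq_mul]
    refine le_trans (Finset.card_nsmul_le_sum _
      (fun j => dist (T j z) (T j x) + dist (T j z) (T j y)) _ fun j hj => ?_)
      (Finset.sum_le_sum_of_subset_of_nonneg (Finset.filter_subset _ _)
        fun _ _ _ => by positivity)
    have h3 : ε < dist (T j x) (T j y) := (Finset.mem_filter.1 hj).2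
    exact h3.le.trans (dist_triangle_left _ _ _)
  have h4 := div_le_div_of_nonneg_right hc (Nat.cast_nonneg (α := ℝ) (Fbox d n).card)
  rw [add_div, mul_div_right_comm] at h4
  refine le_of_mul_le_mul_right (h4.trans ?_) hε
  nlinarith
end
end

section
/- Let (X,T) be a transitive topological dynamical system given by a continuous ℕ^d-action on a compact metric space. If (X,T) is weakly almost periodic (every f ∈ C(X) is weakly almost periodic), then (X,T) is mean equicontinuous. -/
open MeasureTheory Filter Finset Metric
open scoped Classical

noncomputable section

/-- The box `{0,…,n−1}^d` inside `ℕ^d`. -/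
def FboxN (d n : ℕ) : Finset (Fin d → ℕ) :=
  Fintype.piFinset fun _ => Finset.range n

variable {X : Type*}

/-- The Besicovitch pseudometric `d_b` for an `ℕ^d`-action. -/
def dBN {d : ℕ} [PseudoMetricSpace X] (T : (Fin d → ℕ) → X → X) (x y : X) : ℝ :=
  Filter.limsup (fun n : ℕ =>
    (∑ j ∈ FboxN d n, dist (T j x) (T j y)) / ((FboxN d n).card : ℝ)) Filter.atTop

open Topology

set_option linter.unusedSectionVars false
set_option linter.style.haveILetI false

def EE {d : ℕ} [TopologicalSpace X] (T : (Fin d → ℕ) → X → X) : Set (X → X) :=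
  closure (Set.range T)

section A
variable {d : ℕ} [MetricSpace X] [CompactSpace X] (T : (Fin d → ℕ) → X → X)
    (hTc : ∀ j, Continuous (T j))

lemma lemA (hwap : ∀ f : C(X, ℂ), IsCompact (closure (Set.range fun j : Fin d → ℕ =>
      toWeakSpace ℂ C(X, ℂ) (f.comp (ContinuousMap.mk (T j) (hTc j))))))
    {p : X → X} (hp : p ∈ EE T) (f : C(X, ℂ)) :
    ∃ h : C(X, ℂ), (∀ x, h x = f (p x)) ∧ ∀ l : C(X, ℂ) →L[ℂ] ℂ,
      (∀ j, l (f.comp (ContinuousMap.mk (T j) (hTc j))) = l f) → l h = l f := by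
  have hne : (comap T (𝓝 p)).NeBot := by
    rw [comap_neBot_iff]
    intro t ht
    obtain ⟨_, h1, ⟨j, rfl⟩⟩ := mem_closure_iff_nhds.1 hp t ht
    exact ⟨j, h1⟩
  let U : Ultrafilter (Fin d → ℕ) := Ultrafilter.of (comap T (𝓝 p))
  have hU : Tendsto T U (𝓝 p) := tendsto_iff_comap.2 (Ultrafilter.of_le _)
  obtain ⟨w, -, hw⟩ := (hwap f).ultrafilter_le_nhds (U.map (fun j : Fin d → ℕ =>
      toWeakSpace ℂ C(X, ℂ) (f.comp (ContinuousMap.mk (T j) (hTc j))))) (by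
    refine le_principal_iff.2 ?_
    refine Filter.mem_map.2 (Filter.univ_mem' fun j => subset_closure ⟨j, rfl⟩))
  obtain ⟨h, rfl⟩ := (toWeakSpace ℂ C(X, ℂ)).surjective w
  have key : ∀ l : C(X, ℂ) →L[ℂ] ℂ, Tendsto
      (fun j => l (f.comp (ContinuousMap.mk (T j) (hTc j)))) U (𝓝 (l h)) := by
    intro l
    have hc : Continuous fun w : WeakSpace ℂ C(X, ℂ) => l ((toWeakSpace ℂ C(X, ℂ)).symm w) :=
      WeakBilin.eval_continuous (topDualPairing ℂ C(X, ℂ)).flip l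
    exact (hc.tendsto _).comp hw
  refine ⟨h, fun x => ?_, fun l hl => ?_⟩
  · have h1 := key (ContinuousMap.evalCLM ℂ x)
    have h2 : Tendsto (fun j => f (T j x)) U (𝓝 (f (p x))) :=
      (f.continuous.tendsto _).comp ((tendsto_pi_nhds.1 hU) x)
    exact tendsto_nhds_unique h1 h2
  · have h1 := key l
    simp only [hl] at h1
    exact tendsto_nhds_unique h1 tendsto_const_nhds

include hTc in
lemma contE (hwap : ∀ f : C(X, ℂ), IsCompact (closure (Set.range fun j : Fin d → ℕ =>
      toWeakSpace ℂ C(X, ℂ) (f.comp (ContinuousMap.mk (T j) (hTc j))))))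
    {p : X → X} (hp : p ∈ EE T) : Continuous p := by
  rw [continuous_iff_continuousAt]
  intro x
  obtain ⟨h, hh, -⟩ := lemA T hTc hwap hp ⟨fun y => ((dist y (p x) : ℝ) : ℂ), by fun_prop⟩
  rw [ContinuousAt, tendsto_iff_dist_tendsto_zero]
  have h1 : Tendsto (fun y => (h y).re) (𝓝 x) (𝓝 (h x).re) :=
    (Complex.continuous_re.comp h.continuous).tendsto x
  simpa [hh] using h1

variable (hTadd : ∀ i j, T (i + j) = T i ∘ T j) (hcE : ∀ p ∈ EE T, Continuous p)

lemma memE (j) : T j ∈ EE T := subset_closure ⟨j, rfl⟩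

include hTc hTadd in
lemma commT {p : X → X} (hp : p ∈ EE T) (j) : T j ∘ p = p ∘ T j := by
  have : EE T ⊆ {p | T j ∘ p = p ∘ T j} := by
    refine closure_minimal ?_ (isClosed_eq ?_ ?_)
    · rintro _ ⟨i, rfl⟩
      simp [← hTadd, add_comm]
    · exact continuous_pi fun x => (hTc j).comp (continuous_apply x)
    · exact continuous_pi fun x => (continuous_apply (T j x))
  exact this hp

include hTc hTadd hcE in
lemma commE {p q : X → X} (hp : p ∈ EE T) (hq : q ∈ EE T) : p ∘ q = q ∘ p := by
  have : EE T ⊆ {q | p ∘ q = q ∘ p} := by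
    refine closure_minimal ?_ (isClosed_eq ?_ ?_)
    · rintro _ ⟨i, rfl⟩
      exact (commT T hTc hTadd hp i).symm
    · exact continuous_pi fun x => (hcE p hp).comp (continuous_apply x)
    · exact continuous_pi fun x => (continuous_apply (p x))
  exact this hq

include hTadd hcE in
lemma mulE {p q : X → X} (hp : p ∈ EE T) (hq : q ∈ EE T) : p ∘ q ∈ EE T := by
  have h0 : ∀ j, p ∘ T j ∈ EE T := by
    intro j
    have : EE T ⊆ {p | p ∘ T j ∈ EE T} := by
      refine closure_minimal ?_ (isClosed_closure.preimage
        (continuous_pi fun x => continuous_apply (T j x)))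
      rintro _ ⟨i, rfl⟩
      show T i ∘ T j ∈ EE T
      rw [← hTadd]; exact memE T (i + j)
    exact this hp
  have : EE T ⊆ {q | p ∘ q ∈ EE T} := by
    refine closure_minimal ?_ (isClosed_closure.preimage
        (continuous_pi fun x => (hcE p hp).comp (continuous_apply x)))
    rintro _ ⟨i, rfl⟩
    exact h0 i
  exact this hq

include hTc hTadd hcE in
lemma existsU : ∃ u ∈ EE T, u ∘ u = u ∧ ∀ p ∈ EE T, ∃ e ∈ EE T, u = p ∘ e := by
  have hEc : IsCompact (EE T) := isClosed_closure.isCompact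
  have hcomp : ∀ p : EE T, IsCompact ((fun e : X → X => p.1 ∘ e) '' EE T) := fun p =>
    hEc.image (continuous_pi fun x => (hcE p p.2).comp (continuous_apply x))
  haveI : Nonempty (EE T) := ⟨⟨T 0, memE T 0⟩⟩
  obtain ⟨k, hk⟩ := IsCompact.nonempty_iInter_of_directed_nonempty_isCompact_isClosed
    (fun p : EE T => (fun e : X → X => p.1 ∘ e) '' EE T)
    (by
      rintro ⟨p, hp⟩ ⟨q, hq⟩
      refine ⟨⟨p ∘ q, mulE T hTadd hcE hp hq⟩, ?_, ?_⟩
      · rintro _ ⟨e, he, rfl⟩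
        exact ⟨q ∘ e, mulE T hTadd hcE hq he, rfl⟩
      · rintro _ ⟨e, he, rfl⟩
        refine ⟨p ∘ e, mulE T hTadd hcE hp he, ?_⟩
        show q ∘ p ∘ e = (p ∘ q) ∘ e
        rw [commE T hTc hTadd hcE hp hq]; rfl)
    (fun p => ⟨_, ⟨T 0, memE T 0, rfl⟩⟩) hcomp (fun p => (hcomp p).isClosed)
  have hk' : ∀ p ∈ EE T, ∃ e ∈ EE T, p ∘ e = k := fun p hp => by
    simpa using Set.mem_iInter.1 hk ⟨p, hp⟩
  have hkE : k ∈ EE T := by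
    obtain ⟨e, he, rfl⟩ := hk' _ (memE T 0)
    exact mulE T hTadd hcE (memE T 0) he
  obtain ⟨s, hs, hks⟩ := hk' _ (mulE T hTadd hcE hkE hkE)
  refine ⟨k ∘ s, mulE T hTadd hcE hkE hs, ?_, fun p hp => ?_⟩
  · have h1 : s ∘ k = k ∘ s := commE T hTc hTadd hcE hs hkE
    calc (k ∘ s) ∘ (k ∘ s) = k ∘ (s ∘ k) ∘ s := rfl
      _ = ((k ∘ k) ∘ s) ∘ s := by rw [h1]; rfl
      _ = k ∘ s := by rw [hks]
  · obtain ⟨e, he, h⟩ := hk' p hp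
    exact ⟨e ∘ s, mulE T hTadd hcE he hs, by rw [← h]; rfl⟩

lemma surjE {x0 : X} (h0 : Dense (Set.range fun j => T j x0)) (y : X) :
    ∃ p ∈ EE T, p x0 = y := by
  have hEc : IsCompact (EE T) := isClosed_closure.isCompact
  have h1 : IsClosed ((fun p : X → X => p x0) '' EE T) :=
    (hEc.image (continuous_apply x0)).isClosed
  have h2 : Set.range (fun j => T j x0) ⊆ (fun p : X → X => p x0) '' EE T := by
    rintro _ ⟨j, rfl⟩; exact ⟨T j, memE T j, rfl⟩
  exact h1.closure_subset_iff.2 h2 (h0 y)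

include hTc hTadd hcE in
lemma baireL {x0 : X} (h0 : Dense (Set.range fun j => T j x0)) {M : Set X} (hM : IsClosed M)
    (hne : M.Nonempty) {ε : ℝ} (hε : 0 < ε) :
    ∃ y0 ∈ M, ∃ δ > 0, ∀ y ∈ M, dist y y0 < δ → ∀ r ∈ EE T, dist (r y) (r y0) ≤ 3 * ε := by
  haveI : CompactSpace M := isCompact_iff_compactSpace.1 hM.isCompact
  haveI : Nonempty M := hne.to_subtype
  let A : ℕ → Set M := fun k => {y | ∀ i j, dist (T i x0) (T j x0) < 1 / ((k : ℝ) + 1) →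
    dist (T i y) (T j y) ≤ ε}
  have hA : ∀ k, IsClosed (A k) := by
    intro k
    simp only [A, Set.ofPred_forall]
    refine isClosed_iInter fun i => isClosed_iInter fun j => isClosed_iInter fun _ => ?_
    exact isClosed_le (((hTc i).comp continuous_subtype_val).dist
      ((hTc j).comp continuous_subtype_val)) continuous_const
  have hU : ⋃ k, A k = Set.univ := by
    refine Set.eq_univ_of_forall fun y => Set.mem_iUnion.2 ?_
    obtain ⟨p, hp, hpy⟩ := surjE T h0 y.1
    obtain ⟨δ, hδ, h⟩ := Metric.uniformContinuous_iff.1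
      (CompactSpace.uniformContinuous_of_continuous (hcE p hp)) ε hε
    obtain ⟨k, hk⟩ := exists_nat_one_div_lt hδ
    refine ⟨k, fun i j hij => ?_⟩
    have e : ∀ i, T i y.1 = p (T i x0) := fun i => by
      rw [← hpy]; exact congrFun (commT T hTc hTadd hp i) x0
    rw [e, e]
    exact (h (hij.trans hk)).le
  obtain ⟨k, y0, hy0⟩ := nonempty_interior_of_iUnion_of_closed hA hU
  have hk : (0:ℝ) < 1 / ((k : ℝ) + 1) := by positivity
  obtain ⟨t, ht⟩ := isCompact_univ.elim_finite_subcover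
    (fun j => ball (T j x0) (1 / ((k : ℝ) + 1))) (fun _ => isOpen_ball) (fun z _ => by
      obtain ⟨_, ⟨j, rfl⟩, hj⟩ := h0.exists_dist_lt z hk
      exact Set.mem_iUnion.2 ⟨j, hj⟩)
  have hev : ∀ᶠ y : M in 𝓝 y0, y ∈ A k ∧ ∀ i ∈ t, dist (T i y) (T i y0) ≤ ε := by
    refine Filter.Eventually.and (mem_interior_iff_mem_nhds.1 hy0) ?_
    rw [Filter.eventually_all_finset]
    intro i _
    have := ((hTc i).comp (continuous_subtype_val (p := (· ∈ M)))).tendsto y0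
    exact (Metric.tendsto_nhds.1 this ε hε).mono fun y hy => hy.le
  obtain ⟨δ, hδ, hb⟩ := Metric.eventually_nhds_iff.1 hev
  refine ⟨y0, y0.2, δ, hδ, fun y hy hd r hr => ?_⟩
  have : EE T ⊆ {r | dist (r y) (r y0) ≤ 3 * ε} := by
    refine closure_minimal ?_ (isClosed_le
      ((continuous_apply y).dist (continuous_apply y0.1)) continuous_const)
    rintro _ ⟨j, rfl⟩
    obtain ⟨hy1, hy2⟩ := hb (y := ⟨y, hy⟩) hd
    have hy3 := interior_subset hy0
    obtain ⟨i, hi, hij⟩ := Set.mem_iUnion₂.1 (ht (Set.mem_univ (T j x0)))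
    have a1 := hy1 j i hij
    have a2 := hy2 i hi
    have a3 := hy3 j i hij
    have := dist_triangle4 (T j y) (T i y) (T i y0) (T j y0)
    rw [dist_comm (T i y0.1)] at this
    show dist (T j y) (T j y0) ≤ _
    simp only at a1 a2
    linarith
  exact this hr

include hTc hTadd hcE in
lemma equiU {x0 : X} (h0 : Dense (Set.range fun j => T j x0)) {u : X → X} (hu : u ∈ EE T)
    (huu : u ∘ u = u) (hmin : ∀ p ∈ EE T, ∃ e ∈ EE T, u = p ∘ e) (x : X) {ε : ℝ} (hε : 0 < ε) :
    ∃ δ > 0, ∀ y, dist x y ≤ δ → ∀ j, dist (T j (u x)) (T j (u y)) ≤ ε := by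
  have hcl : IsClosed (Set.range u) := (isCompact_range (hcE u hu)).isClosed
  obtain ⟨_, ⟨z, rfl⟩, δ, hδ, H⟩ := baireL T hTc hTadd hcE h0 hcl ⟨u x, x, rfl⟩
    (show 0 < ε / 3 by positivity)
  obtain ⟨pz, hpz, rfl⟩ := surjE T h0 z
  obtain ⟨px, hpx, rfl⟩ := surjE T h0 x
  obtain ⟨e, he, hue⟩ := hmin (u ∘ px) (mulE T hTadd hcE hu hpx)
  have hq : e ∘ pz ∈ EE T := mulE T hTadd hcE he hpz
  set q := e ∘ pz with hqdef
  obtain ⟨s, hs, hqs⟩ := hmin q hq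
  have hqu : ∀ y, q (u y) = u (q y) := fun y => congrFun (commE T hTc hTadd hcE hq hu) y
  have h1 : q (u (px x0)) = u (pz x0) := by
    have := congrFun (commE T hTc hTadd hcE hq (mulE T hTadd hcE hu hpx)) x0
    calc q (u (px x0)) = u (px (q x0)) := this
      _ = ((u ∘ px) ∘ e) (pz x0) := rfl
      _ = u (pz x0) := by rw [← hue]
  have h2 : ∀ y, u y = s (q (u y)) := fun y => by
    have a : s (q (u y)) = q (s (u y)) := congrFun (commE T hTc hTadd hcE hs hq) (u y)
    rw [a]
    have b : q (s (u y)) = u (u y) := (congrFun hqs (u y)).symm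
    rw [b]; exact (congrFun huu y).symm
  have hc : Continuous (q ∘ u) := (hcE q hq).comp (hcE u hu)
  obtain ⟨η, hη, hη'⟩ := Metric.continuous_iff.1 hc (px x0) δ hδ
  refine ⟨η / 2, by positivity, fun y hy j => ?_⟩
  have h3 : dist (q (u y)) (u (pz x0)) < δ := by
    rw [← h1]
    exact hη' y (by rw [dist_comm]; linarith)
  have h4 := H (q (u y)) ⟨q y, (hqu y).symm⟩ h3 (T j ∘ s) (mulE T hTadd hcE (memE T j) hs)
  rw [← h1] at h4
  simp only [Function.comp] at h4
  rw [← h2, ← h2, dist_comm] at h4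
  linarith

end A

lemma folner {d : ℕ} (a : (Fin d → ℕ) → ℂ) (C : ℝ) (hC : ∀ j, ‖a j‖ ≤ C) (k : Fin d → ℕ) :
    Tendsto (fun n : ℕ => (∑ j ∈ FboxN d n, a (j + k)) / ((FboxN d n).card : ℂ)
      - (∑ j ∈ FboxN d n, a j) / ((FboxN d n).card : ℂ)) atTop (𝓝 0) := by
  have hC0 : 0 ≤ C := (norm_nonneg _).trans (hC 0)
  have hcard : ∀ n, (FboxN d n).card = n ^ d := fun n => by simp [FboxN]
  have hlim : Tendsto (fun n : ℕ => 2 * C * (1 - ∏ i, (1 - (k i : ℝ) / n))) atTop (𝓝 0) := by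
    have : Tendsto (fun n : ℕ => 2 * C * (1 - ∏ i, (1 - (k i : ℝ) / n))) atTop
        (𝓝 (2 * C * (1 - ∏ i : Fin d, (1 - (0:ℝ))))) := by
      refine (tendsto_const_nhds.sub (tendsto_finsetProd _ fun i _ => ?_)).const_mul _
      exact tendsto_const_nhds.sub (tendsto_const_div_atTop_nhds_zero_nat _)
    simpa using this
  refine squeeze_zero_norm' ?_ hlim
  filter_upwards [eventually_gt_atTop 0, eventually_ge_atTop (∑ i, k i)] with n hn hnk
  have hki : ∀ i, k i ≤ n := fun i =>
    (Finset.single_le_sum (f := k) (fun _ _ => Nat.zero_le _) (Finset.mem_univ i)).trans hnk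
  set F := FboxN d n
  set G := F.map (addRightEmbedding k)
  have hG : ∑ j ∈ F, a (j + k) = ∑ j ∈ G, a j := by simp [G]
  have hGc : G.card = F.card := by simp [G]
  let I : Finset (Fin d → ℕ) := Fintype.piFinset fun i => Finset.Ico (k i) n
  have hIF : I ⊆ F := by
    intro j hj
    simp only [I, F, FboxN, Fintype.mem_piFinset, Finset.mem_Ico, Finset.mem_range] at hj ⊢
    exact fun i => (hj i).2
  have hIG : I ⊆ G := by
    intro j hj
    simp only [I, Fintype.mem_piFinset, Finset.mem_Ico] at hj
    refine Finset.mem_map.2 ⟨j - k, ?_, ?_⟩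
    · simp only [F, FboxN, Fintype.mem_piFinset, Finset.mem_range, Pi.sub_apply]
      intro i; have := hj i; omega
    · ext i; have := hj i; simp only [addRightEmbedding_apply, Pi.add_apply, Pi.sub_apply]; omega
  have hIc : (I.card : ℝ) = ∏ i, ((n : ℝ) - k i) := by
    simp only [I, Fintype.card_piFinset, Nat.card_Ico, Nat.cast_prod]
    exact Finset.prod_congr rfl fun i _ => Nat.cast_sub (hki i)
  have hb : ∀ S : Finset (Fin d → ℕ), I ⊆ S → S.card = F.card →
      ‖∑ j ∈ S \ I, a j‖ ≤ C * (F.card - I.card) := by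
    intro S hS hSc
    refine (norm_sum_le_of_le _ (fun j _ => hC j)).trans ?_
    rw [Finset.sum_const, nsmul_eq_mul, Finset.card_sdiff_of_subset hS, hSc, mul_comm,
      Nat.cast_sub (hSc ▸ Finset.card_le_card hS)]
  have hF0 : (0:ℝ) < F.card := by
    rw [hcard]; positivity
  rw [← sub_div, norm_div, hG, ← Finset.sum_sdiff hIG, ← Finset.sum_sdiff hIF,
    Complex.norm_natCast, div_le_iff₀ hF0, add_sub_add_right_eq_sub]
  have hprod : ∏ i, (1 - (k i : ℝ) / n) = I.card / F.card := by
    rw [hIc, hcard]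
    have : ∀ i, 1 - (k i : ℝ) / n = ((n : ℝ) - k i) / n := fun i => by
      field_simp
    simp [this, Finset.prod_div_distrib]
  rw [hprod]
  have e : 2 * C * (1 - (I.card : ℝ) / F.card) * F.card = C * (F.card - I.card) + C * (F.card - I.card) := by
    field_simp; ring
  rw [e]
  exact (norm_sub_le _ _).trans (add_le_add (hb G hIG hGc) (hb F hIF rfl))

lemma avgU {d : ℕ} [MetricSpace X] [CompactSpace X] (T : (Fin d → ℕ) → X → X)
    (hTc : ∀ j, Continuous (T j)) (hTadd : ∀ i j, T (i + j) = T i ∘ T j)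
    (hwap : ∀ f : C(X, ℂ), IsCompact (closure (Set.range fun j : Fin d → ℕ =>
      toWeakSpace ℂ C(X, ℂ) (f.comp (ContinuousMap.mk (T j) (hTc j))))))
    {u : X → X} (hu : u ∈ EE T) (huu : u ∘ u = u) (x : X) :
    Tendsto (fun n : ℕ => (∑ j ∈ FboxN d n, dist (T j x) (T j (u x))) / ((FboxN d n).card : ℝ))
      atTop (𝓝 0) := by
  have huc := contE T hTc hwap hu
  let av : ℕ → C(X, ℂ) → ℂ := fun n f => (∑ j ∈ FboxN d n, f (T j x)) / ((FboxN d n).card : ℂ)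
  have hav : ∀ n f, ‖av n f‖ ≤ ‖f‖ := by
    intro n f
    simp only [av, norm_div, Complex.norm_natCast]
    refine div_le_of_le_mul₀ (by positivity) (norm_nonneg _) ?_
    refine (norm_sum_le_of_le _ (fun j _ => f.norm_coe_le_norm _)).trans ?_
    rw [Finset.sum_const, nsmul_eq_mul, mul_comm]
  let g : C(X, ℂ) := ⟨fun y => ((dist y (u y) : ℝ) : ℂ), by fun_prop⟩
  suffices h : Tendsto (fun n => av n g) atTop (𝓝 0) by
    have h1 := (Complex.continuous_re.tendsto _).comp h
    rw [Complex.zero_re] at h1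
    refine h1.congr fun n => ?_
    have e : av n g = ((((∑ j ∈ FboxN d n, dist (T j x) (T j (u x))) / ((FboxN d n).card : ℝ)) : ℝ) : ℂ) := by
      simp only [av, g, ContinuousMap.coe_mk]
      push_cast
      congr 1
      refine Finset.sum_congr rfl fun j _ => ?_
      have := congrFun (commT T hTc hTadd hu j) x
      simp only [Function.comp] at this
      rw [this]
    simp [e]
  rw [tendsto_iff_ultrafilter]
  intro V hV
  have hex : ∀ f, ∃ z, Tendsto (fun n => av n f) V (𝓝 z) := by
    intro f
    obtain ⟨z, -, hz⟩ := (isCompact_closedBall (0:ℂ) ‖f‖).ultrafilter_le_nhds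
      (V.map (fun n => av n f)) (by
        refine le_principal_iff.2 (Filter.mem_map.2 (Filter.univ_mem' fun n => ?_))
        simpa using hav n f)
    exact ⟨z, hz⟩
  choose L hL using hex
  let Ll : C(X, ℂ) →ₗ[ℂ] ℂ :=
    { toFun := L
      map_add' := fun f h => by
        refine tendsto_nhds_unique (hL _) (((hL f).add (hL h)).congr fun n => ?_)
        simp [av, Finset.sum_add_distrib, add_div]
      map_smul' := fun c f => by
        refine tendsto_nhds_unique (hL _) (((hL f).const_mul c).congr fun n => ?_)
        simp only [av, ContinuousMap.smul_apply, smul_eq_mul, ← Finset.mul_sum, mul_div_assoc] }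
  let Lc : C(X, ℂ) →L[ℂ] ℂ := Ll.mkContinuous 1 (fun f => by
    rw [one_mul]
    exact le_of_tendsto (hL f).norm (Filter.Eventually.of_forall fun n => hav n f))
  obtain ⟨h, hh, hinv⟩ := lemA T hTc hwap hu g
  have h0 : h = 0 := by
    ext y
    rw [hh]
    have : u (u y) = u y := congrFun huu y
    simp [g, this]
  have hfin : Lc h = Lc g := by
    refine hinv Lc fun k => ?_
    have h1 := (folner (fun j => g (T j x)) ‖g‖ (fun j => g.norm_coe_le_norm _) k).mono_left hV
    have h2 := (hL (g.comp (ContinuousMap.mk (T k) (hTc k)))).sub (hL g)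
    have h3 := tendsto_nhds_unique h2 (h1.congr fun n => ?_)
    · exact sub_eq_zero.1 h3
    · simp only [av, ContinuousMap.comp_apply, ContinuousMap.coe_mk]
      simp only [add_comm _ k, hTadd, Function.comp]
  rw [h0, map_zero] at hfin
  have h5 : L g = 0 := hfin.symm
  exact h5 ▸ hL g

/-- a transitive weakly almost periodic TDS (given by a continuous
`ℕ^d`-action on a compact metric space) is mean equicontinuous. -/
theorem stmt15 {d : ℕ}
    [MetricSpace X] [CompactSpace X]
    (T : (Fin d → ℕ) → X → X)
    (hTc : ∀ j, Continuous (T j))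
    (hTadd : ∀ i j, T (i + j) = T i ∘ T j)
    (htrans : {x : X | Dense (Set.range fun j : Fin d → ℕ => T j x)} ∈ residual X)
    (hwap : ∀ f : C(X, ℂ), IsCompact (closure (Set.range fun j : Fin d → ℕ =>
      toWeakSpace ℂ C(X, ℂ) (f.comp (ContinuousMap.mk (T j) (hTc j)))))) :
    ∀ x : X, ∀ ε : ℝ, 0 < ε → ∃ δ : ℝ, 0 < δ ∧
      ∀ y : X, dist x y ≤ δ → dBN T x y < ε := by
  intro x ε hε
  haveI : Nonempty X := ⟨x⟩
  obtain ⟨x0, h0⟩ := (dense_of_mem_residual htrans).nonempty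
  have hcE : ∀ p ∈ EE T, Continuous p := fun p hp => contE T hTc hwap hp
  obtain ⟨u, hu, huu, hmin⟩ := existsU T hTc hTadd hcE
  obtain ⟨δ, hδ, H⟩ := equiU T hTc hTadd hcE h0 hu huu hmin x (half_pos hε)
  refine ⟨δ, hδ, fun y hy => ?_⟩
  have h1 := avgU T hTc hTadd hwap hu huu x
  have h2 := avgU T hTc hTadd hwap hu huu y
  have h3 := (h1.add h2).add_const (ε / 2)
  rw [add_zero, zero_add] at h3
  unfold dBN
  refine lt_of_le_of_lt ?_ (half_lt_self hε)
  rw [← h3.limsup_eq]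
  refine Filter.limsup_le_limsup (Filter.Eventually.of_forall fun n => ?_) ?_
    h3.isBoundedUnder_le
  · dsimp only
    rcases Nat.eq_zero_or_pos (FboxN d n).card with hz | hz
    · simp only [hz, Nat.cast_zero, div_zero]; linarith
    have hz' : (0:ℝ) < (FboxN d n).card := by exact_mod_cast hz
    rw [← add_div, div_add' _ _ _ hz'.ne', div_le_div_iff_of_pos_right hz',
      ← Finset.sum_add_distrib, mul_comm, ← nsmul_eq_mul, ← Finset.sum_const,
      ← Finset.sum_add_distrib]
    refine Finset.sum_le_sum fun j _ => ?_
    have a := dist_triangle4 (T j x) (T j (u x)) (T j (u y)) (T j y)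
    have b := H y hy j
    rw [dist_comm (T j (u y)) (T j y)] at a
    linarith
  · refine Filter.IsCoboundedUnder.of_frequently_ge (a := 0)
      (Filter.Frequently.of_forall fun n => ?_)
    positivity
end
end
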